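/- Let f_c ≥ 10 be an integer, n = 2f_c+1, λ_c = 1/f_c, c = 0.1649, and suppose Δ(T) ≥ 2λ_c. Let C₁ and C₂ be the numerical constants from the main support-detection theorem (properties (i) and (ii)). Then for any element t_i in the support T of x with |a_i| > C₁ δ, every solution x̂ of the total-variation minimization program contains an element t̂_i in its support T̂ satisfying |t_i − t̂_i| ≤ sqrt( C₂ δ / (|a_i| − C₁ δ) ) · λ_c. -/

import Mathlib

open Finset

noncomputable section

/-- Wraparound (circle) distance between two real representatives of points on
the circle `𝕋 = ℝ/ℤ` obtained by identifying the endpoints of `[0,1]`. -/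
def cdist (s t : ℝ) : ℝ := ‖((s - t : ℝ) : AddCircle (1 : ℝ))‖

/-- `Δ(T) ≥ d`: the minimum separation condition for the finite set `T ⊂ 𝕋`. -/
def HasMinSep (T : Finset ℝ) (d : ℝ) : Prop :=
  ∀ s ∈ T, ∀ t ∈ T, s ≠ t → d ≤ cdist s t

/-- The complex exponential `e^{i 2 π k t}`. -/
def efun (k : ℤ) (t : ℝ) : ℂ :=
  Complex.exp (2 * (Real.pi : ℂ) * Complex.I * (k : ℂ) * (t : ℂ))

/-- The measurement map `F_n`: the `k`-th Fourier coefficient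
`∫ e^{-i 2 π k t} μ(dt)` of the finite atomic complex measure `μ = ∑_{t ∈ S} a t δ_t`. -/
def Fmeas (fc : ℕ) (S : Finset ℝ) (a : ℝ → ℂ) (k : ℤ) : ℂ :=
  ∑ t ∈ S, a t * efun (-k) t

/-- The `ℓ₂` norm of a vector in `ℂ^n`, `n = 2 f_c + 1`, indexed by `k ∈ {-f_c, …, f_c}`. -/
def l2norm (fc : ℕ) (v : ℤ → ℂ) : ℝ :=
  Real.sqrt (∑ k ∈ Finset.Icc (-(fc : ℤ)) (fc : ℤ), ‖v k‖ ^ 2)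

/-- Total-variation norm of the finite atomic complex measure `∑_{t ∈ S} a t δ_t`. -/
def tvnorm (S : Finset ℝ) (a : ℝ → ℂ) : ℝ := ∑ t ∈ S, ‖a t‖

/-- Feasibility for the data constraint: `‖F_n x̃ - y‖₂ ≤ δ`. -/
def Feasible (fc : ℕ) (δ : ℝ) (y : ℤ → ℂ) (S : Finset ℝ) (a : ℝ → ℂ) : Prop :=
  l2norm fc (fun k => Fmeas fc S a k - y k) ≤ δ

/-- `∑_{t ∈ Sh} ah t δ_t` is a solution of the TV-norm minimization program:
it is supported on `[0,1)`, feasible, and its TV norm is at most that of any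
feasible finite (atomic) complex measure supported on `[0,1)`. -/
def IsSolution (fc : ℕ) (δ : ℝ) (y : ℤ → ℂ) (Sh : Finset ℝ) (ah : ℝ → ℂ) : Prop :=
  ↑Sh ⊆ Set.Ico (0 : ℝ) 1 ∧ Feasible fc δ y Sh ah ∧
    ∀ (S' : Finset ℝ) (a' : ℝ → ℂ), ↑S' ⊆ Set.Ico (0 : ℝ) 1 →
      Feasible fc δ y S' a' → tvnorm Sh ah ≤ tvnorm S' a'

/-- The trigonometric (low-pass) polynomial `t ↦ ∑_{k=-f_c}^{f_c} b_k e^{i 2 π k t}`. -/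
def trigPoly (fc : ℕ) (b : ℤ → ℂ) (t : ℝ) : ℂ :=
  ∑ k ∈ Finset.Icc (-(fc : ℤ)) (fc : ℤ), b k * efun k t

/-!
By property (i), the estimated atoms near `t_i` carry total mass at least `|a_i| - C₁ δ > 0`, while
by property (ii) their second moment about `t_i` is at most `C₂ λ_c² δ`. The smallest squared
distance from these atoms to `t_i` is at most their weighted average, hence at most
`C₂ λ_c² δ / (|a_i| - C₁ δ)`.
-/

section Averaging

variable {ι E : Type*} [SeminormedAddCommGroup E] {s : Finset ι} {b : ι → E}

lemma exists_mem_le_sum_norm_mul_div_norm_sum {f : ι → ℝ} (hf : ∀ i ∈ s, 0 ≤ f i)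
    (hb : 0 < ‖∑ i ∈ s, b i‖) :
    ∃ i ∈ s, f i ≤ (∑ j ∈ s, ‖b j‖ * f j) / ‖∑ j ∈ s, b j‖ := by
  have mass_pos : 0 < ∑ i ∈ s, ‖b i‖ := hb.trans_le (norm_sum_le s b)
  obtain ⟨i, hi, hle⟩ := (concaveOn_id convex_univ).exists_le_of_centerMass
    (fun j _ => norm_nonneg (b j)) mass_pos (fun j _ => Set.mem_univ (f j))
  refine ⟨i, hi, ?_⟩
  calc f i ≤ (∑ j ∈ s, ‖b j‖ * f j) / ∑ j ∈ s, ‖b j‖ := by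
        simpa only [id, centerMass, smul_eq_mul, ← div_eq_inv_mul] using hle
    _ ≤ (∑ j ∈ s, ‖b j‖ * f j) / ‖∑ j ∈ s, b j‖ :=
        div_le_div_of_nonneg_left
          (sum_nonneg fun j hj => mul_nonneg (norm_nonneg _) (hf j hj)) hb (norm_sum_le s b)

lemma exists_mem_le_sqrt_of_norm_sub_sum_le {v : E} {f : ι → ℝ} {ε M : ℝ}
    (hsum : ‖v - ∑ i ∈ s, b i‖ ≤ ε) (hv : ε < ‖v‖)
    (hmoment : ∑ i ∈ s, ‖b i‖ * f i ^ 2 ≤ M) :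
    ∃ i ∈ s, f i ≤ Real.sqrt (M / (‖v‖ - ε)) := by
  have gap_pos : 0 < ‖v‖ - ε := sub_pos.2 hv
  have gap_le : ‖v‖ - ε ≤ ‖∑ i ∈ s, b i‖ := by
    linarith [norm_sub_norm_le v (∑ i ∈ s, b i)]
  obtain ⟨i, hi, hle⟩ := exists_mem_le_sum_norm_mul_div_norm_sum
    (fun j _ => sq_nonneg (f j)) (gap_pos.trans_le gap_le)
  have moment_nonneg : 0 ≤ M := (sum_nonneg fun _ _ => by positivity).trans hmoment
  exact ⟨i, hi, Real.le_sqrt_of_sq_le <|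
    hle.trans (div_le_div₀ moment_nonneg hmoment gap_pos gap_le)⟩

end Averaging

lemma sum_filter_le_sum_sum_filter {ι κ M : Type*} [AddCommMonoid M] [PartialOrder M]
    [IsOrderedAddMonoid M] {s : Finset ι} {t : Finset κ} (r : ι → κ → Prop) [DecidableRel r]
    {f : ι → κ → M} (hf : ∀ i ∈ s, ∀ j ∈ t, 0 ≤ f i j) {j : κ} (hj : j ∈ t) :
    ∑ i ∈ s with r i j, f i j ≤ ∑ i ∈ s, ∑ k ∈ t with r i k, f i k := by
  refine le_of_le_of_eq ?_ (sum_sum_bipartiteAbove_eq_sum_sum_bipartiteBelow r f).symm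
  exact single_le_sum (f := fun k => ∑ i ∈ s with r i k, f i k)
    (fun k hk => sum_nonneg fun i hi => hf i (mem_of_mem_filter i hi) k hk) hj

lemma cdist_comm (s t : ℝ) : cdist s t = cdist t s := by
  rw [cdist, cdist, ← neg_sub, AddCircle.coe_neg, norm_neg]

theorem support_detection_corollary_general {X E : Type*} [SeminormedAddCommGroup E]
    (d : X → X → ℝ) {C₁ C₂ δ r lam : ℝ} (hlam : 0 ≤ lam) {T Sh : Finset X} {a ah : X → E}
    (hprop1 : ∀ t_j ∈ T, ‖a t_j - ∑ t ∈ Sh with d t t_j ≤ r, ah t‖ ≤ C₁ * δ)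
    (hprop2 : ∑ t ∈ Sh, ∑ t_j ∈ T with d t t_j ≤ r, ‖ah t‖ * d t t_j ^ 2 ≤ C₂ * lam ^ 2 * δ)
    {t_i : X} (hti : t_i ∈ T) (hamp : C₁ * δ < ‖a t_i‖) :
    ∃ th_i ∈ Sh, d th_i t_i ≤ Real.sqrt (C₂ * δ / (‖a t_i‖ - C₁ * δ)) * lam := by
  have local_moment_le :
      ∑ t ∈ Sh with d t t_i ≤ r, ‖ah t‖ * d t t_i ^ 2 ≤ C₂ * lam ^ 2 * δ :=
    (sum_filter_le_sum_sum_filter (fun t t_j => d t t_j ≤ r)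
      (fun _ _ _ _ => by positivity) hti).trans hprop2
  obtain ⟨th_i, hth, hle⟩ :=
    exists_mem_le_sqrt_of_norm_sub_sum_le (hprop1 t_i hti) hamp local_moment_le
  refine ⟨th_i, mem_of_mem_filter th_i hth, hle.trans_eq ?_⟩
  rw [mul_right_comm, mul_div_right_comm, Real.sqrt_mul' _ (sq_nonneg lam), Real.sqrt_sq hlam]

/-- Corollary 1.2: let `C₁, C₂ > 0` be constants for which properties (i)
and (ii) of the main support-detection theorem hold. Then for any `t_i ∈ T` with
`|a_i| > C₁ δ`, the support of any solution `x̂` contains a point `th_i` with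
`|t_i - th_i| ≤ √(C₂ δ / (|a_i| - C₁ δ)) λ_c`. -/
theorem support_detection_corollary
    (C₁ C₂ : ℝ) (hC₁ : 0 < C₁) (hC₂ : 0 < C₂)
    (fc : ℕ) (hfc : 10 ≤ fc)
    (T : Finset ℝ) (a : ℝ → ℂ) (hT : ↑T ⊆ Set.Ico (0 : ℝ) 1)
    (hsep : HasMinSep T (2 * (1 / (fc : ℝ))))
    (z : ℤ → ℂ) (δ : ℝ) (hδ : 0 ≤ δ) (hz : l2norm fc z ≤ δ)
    (Sh : Finset ℝ) (ah : ℝ → ℂ)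
    (hsol : IsSolution fc δ (fun k => Fmeas fc T a k + z k) Sh ah)
    -- property (i) of the main theorem, with constant C₁ :
    (hprop1 : ∀ t_j ∈ T,
      ‖a t_j - ∑ t ∈ Sh.filter fun t => cdist t t_j ≤ 0.1649 * (1 / (fc : ℝ)), ah t‖
        ≤ C₁ * δ)
    -- property (ii) of the main theorem, with constant C₂ :
    (hprop2 : ∑ t ∈ Sh, ∑ t_j ∈ T.filter fun t_j => cdist t t_j ≤ 0.1649 * (1 / (fc : ℝ)),
        ‖ah t‖ * (cdist t t_j) ^ 2 ≤ C₂ * (1 / (fc : ℝ)) ^ 2 * δ)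
    (t_i : ℝ) (hti : t_i ∈ T) (hamp : C₁ * δ < ‖a t_i‖) :
    ∃ th_i ∈ Sh,
      cdist t_i th_i ≤ Real.sqrt (C₂ * δ / (‖a t_i‖ - C₁ * δ)) * (1 / (fc : ℝ)) := by
  simpa only [cdist_comm t_i] using
    support_detection_corollary_general cdist (by positivity) hprop1 hprop2 hti hamp
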